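/- arXiv:1806.09298 — 4 statements merged into one kernel-verified Lean document; each statement's English description precedes it below -/
import Mathlib

section
/- Every projective module over the group algebra K[G] of a cyclic group G of order p^k over a field K of characteristic p > 0 is a free K[G]-module. -/
/-!
In characteristic `p` the Frobenius is additive, so over a commutative `p`-group `G` every `x` in
the group algebra has a power `x ^ p ^ n` equal to the scalar `ε x ^ p ^ n`, where `ε` is the
augmentation (the counit of the group algebra). Hence `x` is a unit as soon as `ε x` is one, and the
group algebra is local. When `G` is finite it is also Artinian, so its maximal ideal `𝔪` is
nilpotent. Nakayama's lemma for a nilpotent ideal needs no finiteness: lifting a basis of `M / 𝔪 M`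
gives a generating family of `M`, which is linearly independent because `M` is flat.
-/

open scoped TensorProduct MonoidAlgebra

section Nakayama

theorem le_of_le_sup_smul_of_isNilpotent {R M : Type*} [CommSemiring R] [AddCommMonoid M]
    [Module R M] {I : Ideal R} (hI : IsNilpotent I) {N N' : Submodule R M}
    (hle : N' ≤ N ⊔ I • N') : N' ≤ N := by
  have le_sup_pow_smul (n : ℕ) : N' ≤ N ⊔ I ^ n • N' := by
    induction n with
    | zero => simp
    | succ n ih =>
      calc N' ≤ N ⊔ I • N' := hle
        _ ≤ N ⊔ I • (N ⊔ I ^ n • N') := by gcongr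
        _ = N ⊔ (I • N ⊔ I ^ (n + 1) • N') := by
          rw [Submodule.smul_sup, ← Submodule.mul_smul, ← pow_succ']
        _ ≤ N ⊔ I ^ (n + 1) • N' :=
          sup_le le_sup_left (sup_le_sup_right Submodule.smul_le_right _)
  obtain ⟨n, hn⟩ := hI
  simpa [hn] using le_sup_pow_smul n

variable {R M : Type*} [CommRing R] [AddCommGroup M] [Module R M]

theorem span_eq_top_of_span_tmul_eq_top_of_isNilpotent {I : Ideal R} (hI : IsNilpotent I)
    {ι : Type*} {v : ι → M}
    (hv : Submodule.span (R ⧸ I) (Set.range fun i ↦ (1 : R ⧸ I) ⊗ₜ[R] v i) = ⊤) :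
    Submodule.span R (Set.range v) = ⊤ := by
  have map_span : (Submodule.span R (Set.range v)).map (TensorProduct.mk R (R ⧸ I) M 1) = ⊤ := by
    rw [Submodule.map_span, ← Set.range_comp,
      ← Submodule.restrictScalars_span R (R ⧸ I) Ideal.Quotient.mk_surjective]
    exact congrArg (Submodule.restrictScalars R) hv
  refine top_le_iff.mp (le_of_le_sup_smul_of_isNilpotent hI ?_)
  rw [← LinearMap.ker_tensorProductMk, ← Submodule.comap_map_eq, map_span, Submodule.comap_top]

theorem free_of_flat_of_isNilpotent_maximalIdeal [IsLocalRing R]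
    (hR : IsNilpotent (IsLocalRing.maximalIdeal R)) [Module.Flat R M] : Module.Free R M := by
  let k := IsLocalRing.ResidueField R
  let b := Module.Free.chooseBasis k (k ⊗[R] M)
  obtain ⟨v, hv⟩ : ∃ v, TensorProduct.mk R k M 1 ∘ v = b :=
    (TensorProduct.mk_surjective R M k Ideal.Quotient.mk_surjective).comp_left b
  have linearIndependent_v : LinearIndependent R v :=
    Module.IsLocalRing.linearIndependent_of_flat v (hv ▸ b.linearIndependent)
  have span_v : Submodule.span R (Set.range v) = ⊤ :=
    span_eq_top_of_span_tmul_eq_top_of_isNilpotent hR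
      (hv ▸ b.span_eq : Submodule.span k (Set.range (TensorProduct.mk R k M 1 ∘ v)) = ⊤)
  exact .of_basis (.mk linearIndependent_v span_v.ge)

end Nakayama

section GroupAlgebra

variable {R : Type*} [CommRing R] {p : ℕ} [Fact p.Prime] [CharP R p]
  {G : Type*} [CommGroup G]

theorem exists_pow_eq_algebraMap_counit_pow (hG : IsPGroup p G) (x : R[G]) :
    ∃ n : ℕ, x ^ p ^ n = algebraMap R R[G] (Coalgebra.counit (R := R) x ^ p ^ n) := by
  have : CharP R[G] p := charP_of_injective_algebraMap (FaithfulSMul.algebraMap_injective R R[G]) p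
  induction x using MonoidAlgebra.induction_on with
  | of g =>
    obtain ⟨n, hn⟩ := hG g
    exact ⟨n, by rw [← map_pow, hn]; simp⟩
  | add x y hx hy =>
    obtain ⟨m, hm⟩ := hx
    obtain ⟨n, hn⟩ := hy
    refine ⟨m + n, ?_⟩
    have hx' : x ^ p ^ (m + n) = algebraMap R R[G] (Coalgebra.counit (R := R) x ^ p ^ (m + n)) := by
      rw [pow_add, pow_mul, hm, ← map_pow, ← pow_mul]
    have hy' : y ^ p ^ (m + n) = algebraMap R R[G] (Coalgebra.counit (R := R) y ^ p ^ (m + n)) := by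
      rw [pow_add, mul_comm, pow_mul, hn, ← map_pow, ← pow_mul]
    rw [add_pow_char_pow, hx', hy', ← map_add, ← add_pow_char_pow, ← map_add]
  | smul r x hx =>
    obtain ⟨n, hn⟩ := hx
    exact ⟨n, by rw [smul_pow, hn, map_smul, smul_eq_mul, mul_pow, map_mul, Algebra.smul_def]⟩

theorem isLocalHom_counitAlgHom_of_isPGroup (hG : IsPGroup p G) :
    IsLocalHom (Bialgebra.counitAlgHom R R[G]) where
  map_nonunit x hx := by
    obtain ⟨n, hn⟩ := exists_pow_eq_algebraMap_counit_pow (R := R) hG x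
    have isUnit_pow : IsUnit (x ^ p ^ n) := hn ▸ (hx.pow _).map (algebraMap R R[G])
    exact (isUnit_pow_iff (pow_ne_zero n (Fact.out : p.Prime).ne_zero)).mp isUnit_pow

theorem isLocalRing_monoidAlgebra_of_isPGroup [IsLocalRing R] (hG : IsPGroup p G) :
    IsLocalRing R[G] :=
  have := isLocalHom_counitAlgHom_of_isPGroup (R := R) hG
  RingHom.domain_isLocalRing (Bialgebra.counitAlgHom R R[G] : R[G] →+* R)

theorem statement2_general [IsLocalRing R] [IsArtinianRing R] [Finite G] (hG : IsPGroup p G)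
    (M : Type*) [AddCommGroup M] [Module R[G] M] [Module.Flat R[G] M] : Module.Free R[G] M := by
  have := isLocalRing_monoidAlgebra_of_isPGroup (R := R) hG
  have isArtinianRing : IsArtinianRing R[G] := .of_finite R _
  exact free_of_flat_of_isNilpotent_maximalIdeal
    ((isArtinianRing_iff_isNilpotent_maximalIdeal R[G]).mp isArtinianRing)

end GroupAlgebra

/-- every projective module over the group algebra `K[G]` of a cyclic group
`G` of order `p^k` over a field `K` of characteristic `p > 0` is a free `K[G]`-module. -/
theorem statement2 {K : Type*} [Field K] {p : ℕ} [Fact p.Prime] [CharP K p]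
    {G : Type*} [Group G] [Fintype G] (hG : IsCyclic G) (k : ℕ)
    (hcard : Fintype.card G = p ^ k)
    (M : Type*) [AddCommGroup M] [Module (MonoidAlgebra K G) M]
    (hproj : Module.Projective (MonoidAlgebra K G) M) :
    Module.Free (MonoidAlgebra K G) M := by
  let : CommGroup G := IsCyclic.commGroup
  exact statement2_general (IsPGroup.of_card (Nat.card_eq_fintype_card.trans hcard)) M
end

section
/- Both u and u' have order 8 in GL_10(K); that is, u⁸ = I, u⁴ ≠ I, u'⁸ = I, and u'⁴ ≠ I. -/
open Matrix

/-- `E i j`: the 10×10 matrix with a single `1` in position `(i, j)`. -/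
def Emat (K : Type*) [Field K] (i j : Fin 10) : Matrix (Fin 10) (Fin 10) K :=
  Matrix.single i j 1

/-- The antidiagonal Gram matrix `J` of the alternating form `β(v, w) = vᵀ J w`. -/
def Jmat (K : Type*) [Field K] : Matrix (Fin 10) (Fin 10) K :=
  Matrix.of fun i j => if (i : ℕ) + (j : ℕ) = 9 then 1 else 0

/-- The generator `A = I + E₁,₅ + E₁,₁₀ + E₆,₁₀` (1-indexed). -/
def Amat (K : Type*) [Field K] : Matrix (Fin 10) (Fin 10) K :=
  1 + Emat K 0 4 + Emat K 0 9 + Emat K 5 9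

/-- The generator `B = E₂,₁ + E₃,₂ + E₄,₃ + E₅,₄ + E₁₀,₅ + E₉,₁₀ + E₈,₉ + E₇,₈ + E₆,₇ + E₁,₆`
(1-indexed). -/
def Bmat (K : Type*) [Field K] : Matrix (Fin 10) (Fin 10) K :=
  Emat K 1 0 + Emat K 2 1 + Emat K 3 2 + Emat K 4 3 + Emat K 9 4 +
    Emat K 8 9 + Emat K 7 8 + Emat K 6 7 + Emat K 5 6 + Emat K 0 5

/-- `u = B⁴AB⁶AB⁵A`. -/
def uMat (K : Type*) [Field K] : Matrix (Fin 10) (Fin 10) K :=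
  Bmat K ^ 4 * Amat K * Bmat K ^ 6 * Amat K * Bmat K ^ 5 * Amat K

/-- `u' = BAB²AB⁴AB³A`. -/
def u'Mat (K : Type*) [Field K] : Matrix (Fin 10) (Fin 10) K :=
  Bmat K * Amat K * Bmat K ^ 2 * Amat K * Bmat K ^ 4 * Amat K * Bmat K ^ 3 * Amat K

/-!
In a ring of characteristic 2, let `s² = t² = 1` and `g = st`. Then `(s + t)² = g + g⁻¹`, so
`g (s + t)² = g² + 1`, and Frobenius gives `g ^ 2ᵏ = 1` if and only if `(s + t) ^ 2ᵏ = 0`.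

Both words are products of two involutions. The permutation matrix `B` is a 10-cycle; put
`Xₖ = Bᵏ A B⁻ᵏ = 1 + Nₖ`, where `Nₖ` is a sum of three matrix units and `Nₖ² = 0`. Moving the
powers of `B` to the right gives `u = X₄ (A B⁵ A)` and `u' = (X₁ X₃) (X₇ X₀)`, where `X₁, X₃`
commute and `X₇, X₀` commute. In both cases `(s + t)²` is a sum of a few matrix units; reading these
as edges of a directed graph, further powers count paths modulo 2.
-/

lemma one_add_mul_one_add_of_mul_eq_zero {R : Type*} [Semiring R] {x y : R} (h : x * y = 0) :
    (1 + x) * (1 + y) = 1 + (x + y) := by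
  rw [add_mul, one_mul, mul_add, mul_one, h, add_zero, add_right_comm, add_assoc]

section CharTwo

variable {R : Type*} [Ring R] [CharP R 2] {s t x : R}

lemma add_sq_of_sq_eq_one (hs : s ^ 2 = 1) (ht : t ^ 2 = 1) :
    (s + t) ^ 2 = s * t + t * s := by
  calc (s + t) ^ 2 = s ^ 2 + t ^ 2 + (s * t + t * s) := by noncomm_ring
    _ = s * t + t * s := by rw [hs, ht, CharTwo.add_self_eq_zero, zero_add]

theorem mul_pow_two_pow_eq_one_iff (hs : s ^ 2 = 1) (ht : t ^ 2 = 1) (k : ℕ) :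
    (s * t) ^ 2 ^ (k + 1) = 1 ↔ (s + t) ^ 2 ^ (k + 1) = 0 := by
  have hst : s * t * (t * s) = 1 := by
    rw [mul_assoc, ← mul_assoc t, ← sq t, ht, one_mul, ← sq, hs]
  have hts : t * s * (s * t) = 1 := by
    rw [mul_assoc, ← mul_assoc s, ← sq s, hs, one_mul, ← sq, ht]
  have hcomm : Commute (s * t) ((s + t) ^ 2) := by
    rw [add_sq_of_sq_eq_one hs ht]
    exact (Commute.refl _).add_right (hst.trans hts.symm)
  have hmul : s * t * (s + t) ^ 2 = (s * t) ^ 2 + 1 := by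
    rw [add_sq_of_sq_eq_one hs ht, mul_add, hst, sq]
  have hpow : (s * t) ^ 2 ^ k * (s + t) ^ 2 ^ (k + 1) = (s * t) ^ 2 ^ (k + 1) + 1 := by
    rw [pow_succ', pow_mul, pow_mul, ← hcomm.mul_pow, hmul,
      add_pow_char_pow_of_commute _ _ (Commute.one_right _), one_pow]
  have hunit : IsUnit ((s * t) ^ 2 ^ k) := IsUnit.pow _ ⟨⟨_, _, hst, hts⟩, rfl⟩
  rw [← CharTwo.add_eq_zero, ← hpow, hunit.mul_right_eq_zero]

theorem orderOf_mul_eq_two_pow (hs : s ^ 2 = 1) (ht : t ^ 2 = 1) {k : ℕ}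
    (hne : (s + t) ^ 2 ^ (k + 1) ≠ 0) (hzero : (s + t) ^ 2 ^ (k + 2) = 0) :
    orderOf (s * t) = 2 ^ (k + 2) :=
  orderOf_eq_prime_pow (mt (mul_pow_two_pow_eq_one_iff hs ht k).1 hne)
    ((mul_pow_two_pow_eq_one_iff hs ht (k + 1)).2 hzero)

lemma one_add_sq_of_sq_eq_zero (hx : x ^ 2 = 0) : (1 + x) ^ 2 = 1 := by
  rw [(Commute.one_left x).add_sq, hx, CharTwo.two_eq_zero (R := R), one_pow, zero_mul, zero_mul,
    add_zero, add_zero]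

lemma one_add_add_one_add (x y : R) : 1 + x + (1 + y) = x + y := by
  rw [add_add_add_comm, CharTwo.add_self_eq_zero, zero_add]

end CharTwo

/-- The 10-cycle by which `B` permutes the standard basis: column `i` of `B` is the basis vector
with index `basisCycle i` (indices start at `0`). -/
def basisCycle : Equiv.Perm (Fin 10) :=
  c[0, 1, 2, 3, 4, 9, 8, 7, 6, 5]

/-- The square-zero part `Nₖ = Bᵏ (A - 1) B⁻ᵏ` of the `k`-th conjugate of `A`, written out in
matrix units. -/
def conjNilpart (K : Type*) [Field K] (k : ℕ) : Matrix (Fin 10) (Fin 10) K :=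
  Emat K ((basisCycle ^ k) 0) ((basisCycle ^ k) 4) +
    Emat K ((basisCycle ^ k) 0) ((basisCycle ^ k) 9) +
    Emat K ((basisCycle ^ k) 5) ((basisCycle ^ k) 9)

section MatrixUnits

variable (K : Type*) [Field K]

lemma Emat_mul_Emat (i j k l : Fin 10) :
    Emat K i j * Emat K k l = if j = k then Emat K i l else 0 := by
  split_ifs with h
  · simp [Emat, h]
  · simp [Emat, h]

lemma Bmat_eq_sum : Bmat K = ∑ i, Emat K (basisCycle i) i := by
  simp only [Fin.sum_univ_succ, Fin.sum_univ_zero]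
  change Bmat K = Emat K 1 0 + (Emat K 2 1 + (Emat K 3 2 + (Emat K 4 3 + (Emat K 9 4 +
    (Emat K 0 5 + (Emat K 5 6 + (Emat K 6 7 + (Emat K 7 8 + (Emat K 8 9 + 0)))))))))
  rw [Bmat]
  abel

lemma Bmat_pow_eq_sum (k : ℕ) : Bmat K ^ k = ∑ i, Emat K ((basisCycle ^ k) i) i := by
  induction k with
  | zero => exact Matrix.sum_single_one.symm
  | succ k ih =>
    rw [pow_succ', ih, Bmat_eq_sum]
    simp [Finset.mul_sum, Finset.sum_mul, Emat_mul_Emat, pow_succ']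

lemma Bmat_pow_mul_Emat (k : ℕ) (i j : Fin 10) :
    Bmat K ^ k * Emat K i j = Emat K ((basisCycle ^ k) i) j := by
  simp [Bmat_pow_eq_sum, Finset.sum_mul, Emat_mul_Emat]

lemma Emat_mul_Bmat_pow (k : ℕ) (i j : Fin 10) :
    Emat K i ((basisCycle ^ k) j) * Bmat K ^ k = Emat K i j := by
  simp [Bmat_pow_eq_sum, Finset.mul_sum, Emat_mul_Emat]

lemma Bmat_pow_ten : Bmat K ^ 10 = 1 := by
  rw [Bmat_pow_eq_sum, show basisCycle ^ 10 = 1 by decide +kernel]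
  exact Matrix.sum_single_one

lemma basisCycle_pow_five (i : Fin 10) : (basisCycle ^ 5) i = i.rev := by
  revert i
  decide +kernel

lemma Bmat_pow_five_mul_Emat (i j : Fin 10) : Bmat K ^ 5 * Emat K i j = Emat K i.rev j := by
  rw [Bmat_pow_mul_Emat, basisCycle_pow_five]

lemma Emat_mul_Bmat_pow_five (i j : Fin 10) : Emat K i j * Bmat K ^ 5 = Emat K i j.rev := by
  rw [← Emat_mul_Bmat_pow K 5 i j.rev, basisCycle_pow_five, Fin.rev_rev]

end MatrixUnits

section Conjugates

variable (K : Type*) [Field K]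

lemma Amat_eq_one_add : Amat K = 1 + conjNilpart K 0 := by
  simp only [Amat, conjNilpart, pow_zero, Equiv.Perm.one_apply]
  abel

lemma Bmat_pow_mul_Amat (k : ℕ) : Bmat K ^ k * Amat K = (1 + conjNilpart K k) * Bmat K ^ k := by
  simp only [Amat, conjNilpart, mul_add, add_mul, mul_one, one_mul, Bmat_pow_mul_Emat,
    Emat_mul_Bmat_pow]
  abel

lemma conjNilpart_sq (k : ℕ) : conjNilpart K k ^ 2 = 0 := by
  simp [conjNilpart, sq, mul_add, add_mul, Emat_mul_Emat]

section Entries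

set_option maxRecDepth 2000

lemma conjNilpart_zero : conjNilpart K 0 = Emat K 0 4 + Emat K 0 9 + Emat K 5 9 := rfl

lemma conjNilpart_one : conjNilpart K 1 = Emat K 1 9 + Emat K 1 8 + Emat K 0 8 := rfl

lemma conjNilpart_three : conjNilpart K 3 = Emat K 3 7 + Emat K 3 6 + Emat K 2 6 := rfl

lemma conjNilpart_four : conjNilpart K 4 = Emat K 4 6 + Emat K 4 5 + Emat K 3 5 := rfl

lemma conjNilpart_seven : conjNilpart K 7 = Emat K 7 1 + Emat K 7 2 + Emat K 8 2 := rfl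

end Entries

lemma conjNilpart_one_mul_three : conjNilpart K 1 * conjNilpart K 3 = 0 := by
  simp [conjNilpart_one, conjNilpart_three, mul_add, add_mul, Emat_mul_Emat]

lemma conjNilpart_seven_mul_zero : conjNilpart K 7 * conjNilpart K 0 = 0 := by
  simp [conjNilpart_seven, conjNilpart_zero, mul_add, add_mul, Emat_mul_Emat]

lemma conjNilpart_one_add_three_sq : (conjNilpart K 1 + conjNilpart K 3) ^ 2 = 0 := by
  simp [conjNilpart_one, conjNilpart_three, sq, mul_add, add_mul, Emat_mul_Emat]

lemma conjNilpart_seven_add_zero_sq : (conjNilpart K 7 + conjNilpart K 0) ^ 2 = 0 := by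
  simp [conjNilpart_seven, conjNilpart_zero, sq, mul_add, add_mul, Emat_mul_Emat]

lemma uMat_eq :
    uMat K = (1 + conjNilpart K 4) * (Amat K * Bmat K ^ 5 * Amat K) := by
  calc uMat K
    _ = Bmat K ^ 4 * Amat K * Bmat K ^ 6 * (Amat K * Bmat K ^ 5 * Amat K) := by
      simp only [uMat, mul_assoc]
    _ = (1 + conjNilpart K 4) * Bmat K ^ 10 * (Amat K * Bmat K ^ 5 * Amat K) := by
      rw [Bmat_pow_mul_Amat, mul_assoc _ (Bmat K ^ 4), ← pow_add]
    _ = (1 + conjNilpart K 4) * (Amat K * Bmat K ^ 5 * Amat K) := by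
      rw [Bmat_pow_ten, mul_one]

lemma u'Mat_eq :
    u'Mat K = (1 + (conjNilpart K 1 + conjNilpart K 3)) *
      (1 + (conjNilpart K 7 + conjNilpart K 0)) := by
  have hB (k l : ℕ) (M : Matrix (Fin 10) (Fin 10) K) :
      Bmat K ^ k * (Bmat K ^ l * M) = Bmat K ^ (k + l) * M := by
    rw [← mul_assoc, ← pow_add]
  have hBA (k : ℕ) (M : Matrix (Fin 10) (Fin 10) K) :
      Bmat K ^ k * (Amat K * M) = (1 + conjNilpart K k) * (Bmat K ^ k * M) := by
    rw [← mul_assoc, Bmat_pow_mul_Amat, mul_assoc]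
  calc u'Mat K
    _ = Bmat K ^ 1 * (Amat K * (Bmat K ^ 2 * (Amat K * (Bmat K ^ 4 * (Amat K *
          (Bmat K ^ 3 * Amat K)))))) := by
      simp only [u'Mat, pow_one, mul_assoc]
    _ = (1 + conjNilpart K 1) * ((1 + conjNilpart K 3) * ((1 + conjNilpart K 7) *
          (Bmat K ^ 10 * Amat K))) := by
      rw [hBA, hB, hBA, hB, hBA, hB]
    _ = (1 + (conjNilpart K 1 + conjNilpart K 3)) * (1 + (conjNilpart K 7 + conjNilpart K 0)) := by
      rw [Bmat_pow_ten, one_mul, Amat_eq_one_add, ← mul_assoc,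
        one_add_mul_one_add_of_mul_eq_zero (conjNilpart_one_mul_three K),
        one_add_mul_one_add_of_mul_eq_zero (conjNilpart_seven_mul_zero K)]

end Conjugates

/-- The sum of the two factors in `u = X₄ (A B⁵ A)`, which are involutions in characteristic 2. -/
def uInvolutionSum (K : Type*) [Field K] : Matrix (Fin 10) (Fin 10) K :=
  1 + conjNilpart K 4 + Amat K * Bmat K ^ 5 * Amat K

/-- The sum of the two factors in `u' = (1 + (N₁ + N₃)) (1 + (N₇ + N₀))`, which are involutions in
characteristic 2; their identity summands cancel there and are left out. -/
def u'InvolutionSum (K : Type*) [Field K] : Matrix (Fin 10) (Fin 10) K :=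
  conjNilpart K 1 + conjNilpart K 3 + (conjNilpart K 7 + conjNilpart K 0)

section SumOfInvolutions

variable (K : Type*) [Field K]

lemma u'InvolutionSum_sq :
    u'InvolutionSum K ^ 2 =
      Emat K 1 2 + Emat K 0 2 + Emat K 3 1 + Emat K 3 2 + Emat K 7 9 + Emat K 7 8 + Emat K 7 6 +
        Emat K 8 6 := by
  simp only [u'InvolutionSum, conjNilpart_one, conjNilpart_three, conjNilpart_seven,
    conjNilpart_zero, sq, mul_add, add_mul, Emat_mul_Emat, Fin.reduceEq, if_true, if_false]
  abel

lemma u'InvolutionSum_pow_four : u'InvolutionSum K ^ 4 = Emat K 3 2 + Emat K 7 6 := by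
  rw [show 4 = 2 * 2 from rfl, pow_mul, u'InvolutionSum_sq]
  simp [sq, mul_add, add_mul, Emat_mul_Emat]

lemma u'InvolutionSum_pow_four_ne_zero : u'InvolutionSum K ^ 4 ≠ 0 := by
  rw [u'InvolutionSum_pow_four]
  intro h
  simpa [Emat] using congrFun₂ h 3 2

lemma u'InvolutionSum_pow_eight : u'InvolutionSum K ^ 8 = 0 := by
  rw [show 8 = 4 * 2 from rfl, pow_mul, u'InvolutionSum_pow_four]
  simp [sq, mul_add, add_mul, Emat_mul_Emat]

variable [CharP K 2]

lemma one_add_conjNilpart_sq (k : ℕ) : (1 + conjNilpart K k) ^ 2 = 1 :=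
  one_add_sq_of_sq_eq_zero (conjNilpart_sq K k)

lemma Amat_sq : Amat K ^ 2 = 1 := by
  rw [Amat_eq_one_add, one_add_conjNilpart_sq]

lemma Amat_mul_Bmat_pow_five_mul_Amat_sq : (Amat K * Bmat K ^ 5 * Amat K) ^ 2 = 1 := by
  calc (Amat K * Bmat K ^ 5 * Amat K) ^ 2
    _ = Amat K * Bmat K ^ 5 * Amat K ^ 2 * Bmat K ^ 5 * Amat K := by simp only [sq, mul_assoc]
    _ = Amat K * Bmat K ^ 10 * Amat K := by
      rw [Amat_sq, mul_one, mul_assoc (Amat K), ← pow_add]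
    _ = 1 := by rw [Bmat_pow_ten, mul_one, ← sq, Amat_sq]

lemma uInvolutionSum_sq_eq_mul_add_mul :
    uInvolutionSum K ^ 2 =
      conjNilpart K 4 * (Amat K * Bmat K ^ 5 * Amat K) +
        Amat K * Bmat K ^ 5 * Amat K * conjNilpart K 4 := by
  rw [uInvolutionSum, add_sq_of_sq_eq_one (one_add_conjNilpart_sq K 4)
    (Amat_mul_Bmat_pow_five_mul_Amat_sq K), add_mul, mul_add, one_mul, mul_one, add_add_add_comm,
    CharTwo.add_self_eq_zero, zero_add]

lemma uInvolutionSum_sq :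
    uInvolutionSum K ^ 2 =
      Emat K 4 0 + Emat K 4 9 + Emat K 4 3 + Emat K 0 5 + Emat K 0 6 + Emat K 9 5 + Emat K 9 6 +
        Emat K 3 0 + Emat K 3 9 + Emat K 6 5 := by
  rw [uInvolutionSum_sq_eq_mul_add_mul, Amat_eq_one_add, conjNilpart_zero, conjNilpart_four]
  simp only [add_mul, mul_add, one_mul, mul_one, Emat_mul_Emat, Bmat_pow_five_mul_Emat,
    Emat_mul_Bmat_pow_five, Fin.reduceRev, Fin.reduceEq, if_true, if_false, add_zero, zero_add]
  simp only [add_comm, add_left_comm, add_assoc, CharTwo.add_cancel_left]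

lemma uInvolutionSum_pow_four :
    uInvolutionSum K ^ 4 = Emat K 4 0 + Emat K 4 9 + Emat K 0 5 + Emat K 9 5 := by
  rw [show 4 = 2 * 2 from rfl, pow_mul, uInvolutionSum_sq]
  simp only [sq, add_mul, mul_add, Emat_mul_Emat, Fin.reduceEq, if_true, if_false, add_zero,
    zero_add]
  simp only [add_comm, add_left_comm, add_assoc, CharTwo.add_self_eq_zero, CharTwo.add_cancel_left,
    add_zero]

lemma uInvolutionSum_pow_four_ne_zero : uInvolutionSum K ^ 4 ≠ 0 := by
  rw [uInvolutionSum_pow_four]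
  intro h
  simpa [Emat] using congrFun₂ h 4 0

lemma uInvolutionSum_pow_eight : uInvolutionSum K ^ 8 = 0 := by
  rw [show 8 = 4 * 2 from rfl, pow_mul, uInvolutionSum_pow_four]
  simp [sq, mul_add, add_mul, Emat_mul_Emat, CharTwo.add_self_eq_zero]

end SumOfInvolutions

section Orders

variable (K : Type*) [Field K] [CharP K 2]

theorem orderOf_uMat : orderOf (uMat K) = 8 := by
  rw [uMat_eq]
  exact orderOf_mul_eq_two_pow (k := 1) (one_add_conjNilpart_sq K 4)
    (Amat_mul_Bmat_pow_five_mul_Amat_sq K) (uInvolutionSum_pow_four_ne_zero K)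
    (uInvolutionSum_pow_eight K)

theorem orderOf_u'Mat : orderOf (u'Mat K) = 8 := by
  have hsum : 1 + (conjNilpart K 1 + conjNilpart K 3) + (1 + (conjNilpart K 7 + conjNilpart K 0)) =
      u'InvolutionSum K := one_add_add_one_add _ _
  rw [u'Mat_eq]
  refine orderOf_mul_eq_two_pow (k := 1)
    (one_add_sq_of_sq_eq_zero (conjNilpart_one_add_three_sq K))
    (one_add_sq_of_sq_eq_zero (conjNilpart_seven_add_zero_sq K)) ?_ ?_
  · rw [hsum]
    exact u'InvolutionSum_pow_four_ne_zero K
  · rw [hsum]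
    exact u'InvolutionSum_pow_eight K

end Orders

/-- both `u` and `u'` have order `8` in `GL₁₀(K)`:
`u⁸ = I`, `u⁴ ≠ I`, `u'⁸ = I`, `u'⁴ ≠ I`. -/
theorem statement7 (K : Type*) [Field K] [CharP K 2] :
    uMat K ^ 8 = 1 ∧ uMat K ^ 4 ≠ 1 ∧ u'Mat K ^ 8 = 1 ∧ u'Mat K ^ 4 ≠ 1 := by
  have pow_of_orderOf {g : Matrix (Fin 10) (Fin 10) K} (hg : orderOf g = 8) :
      g ^ 8 = 1 ∧ g ^ 4 ≠ 1 :=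
    ⟨orderOf_dvd_iff_pow_eq_one.1 hg.dvd, pow_ne_one_of_lt_orderOf (by norm_num) (by omega)⟩
  exact and_assoc.1 ⟨pow_of_orderOf (orderOf_uMat K), pow_of_orderOf (orderOf_u'Mat K)⟩
end

section
/- Let X' = u' − I. For every v ∈ V with X'²v = 0, one has β(v, X'v) = 0. (Hence Hesselink's invariant χ(2) of u' equals 0, so u' lies in the symplectic unipotent class labelled (2₀², 6₃).) -/
open Matrix

/-!
In characteristic 2 the cross terms of `β(v, X'v)` cancel: with coordinates indexed from `0`, it
equals `(v₂ + v₆ + v₈ + v₉)² + v₆(v₁ + v₂) + v₂(v₈ + v₉)`. The subspace `ker X'²` is cut out by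
`v₁ = v₂ = v₆ = 0` and `v₈ = v₉`, and there each of the three summands vanishes.
-/

section CoordinateFormulas

variable {K : Type*} [Field K] (v : Fin 10 → K)

lemma Amat_mulVec :
    Amat K *ᵥ v = ![v 0 + v 4 + v 9, v 1, v 2, v 3, v 4, v 5 + v 9, v 6, v 7, v 8, v 9] := by
  ext k
  fin_cases k <;> simp [Amat, Emat, add_mulVec, single_mulVec]

lemma Bmat_mulVec :
    Bmat K *ᵥ v = ![v 5, v 0, v 1, v 2, v 3, v 6, v 7, v 8, v 9, v 4] := by
  ext k
  fin_cases k <;> simp [Bmat, Emat, add_mulVec, single_mulVec]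

lemma Jmat_mulVec : Jmat K *ᵥ v = v ∘ Fin.rev := by
  ext k
  have add_eq_nine_iff (j : Fin 10) : (k : ℕ) + j = 9 ↔ k.rev = j := by
    rw [Fin.ext_iff, Fin.val_rev]
    lia
  simp [Jmat, mulVec, dotProduct, add_eq_nine_iff]

variable [CharP K 2]

lemma u'Mat_sub_one_mulVec :
    (u'Mat K - 1) *ᵥ v =
      ![v 2 + v 4 + v 8 + v 9, v 2 + v 8 + v 9, v 6, v 1 + v 2 + v 6 + v 7, 0,
        v 9, 0, v 1 + v 2, v 2, 0] := by
  simp only [u'Mat, sub_mulVec, one_mulVec, pow_succ, pow_zero, one_mul, ← mulVec_mulVec,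
    Amat_mulVec, Bmat_mulVec, cons_val]
  ext k
  -- `grind` reduces coefficients modulo 2 through the instance `CharP K 2`.
  fin_cases k <;>
    simp only [Fin.zero_eta, Fin.mk_one, Fin.reduceFinMk, Pi.sub_apply, cons_val] <;> grind

lemma u'Mat_sub_one_sq_mulVec :
    ((u'Mat K - 1) ^ 2) *ᵥ v =
      ![v 2 + v 6, v 2 + v 6, 0, v 1 + v 6 + v 8 + v 9, 0,
        0, 0, v 2 + v 6 + v 8 + v 9, v 6, 0] := by
  simp only [pow_two, ← mulVec_mulVec, u'Mat_sub_one_mulVec, cons_val]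
  ext k
  fin_cases k <;> simp only [Fin.zero_eta, Fin.mk_one, Fin.reduceFinMk, cons_val] <;> grind

lemma u'Mat_sub_one_sq_mulVec_eq_zero_iff :
    ((u'Mat K - 1) ^ 2) *ᵥ v = 0 ↔ v 1 = 0 ∧ v 2 = 0 ∧ v 6 = 0 ∧ v 8 = v 9 := by
  rw [u'Mat_sub_one_sq_mulVec]
  constructor
  · intro h
    have h₆ : v 6 = 0 := by simpa using congrFun h 8
    have h₂ : v 2 = 0 := by simpa [h₆] using congrFun h 0
    have h₈₉ : v 8 = v 9 := by simpa [h₂, h₆, CharTwo.add_eq_zero] using congrFun h 7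
    have h₁ : v 1 = 0 := by simpa [h₆, h₈₉, add_assoc, CharTwo.add_self_eq_zero] using congrFun h 3
    exact ⟨h₁, h₂, h₆, h₈₉⟩
  · rintro ⟨h₁, h₂, h₆, h₈₉⟩
    simp [h₁, h₂, h₆, h₈₉, CharTwo.add_self_eq_zero]

lemma dotProduct_Jmat_mulVec_u'Mat_sub_one_mulVec :
    v ⬝ᵥ (Jmat K *ᵥ ((u'Mat K - 1) *ᵥ v)) =
      (v 2 + v 6 + v 8 + v 9) ^ 2 + v 6 * (v 1 + v 2) + v 2 * (v 8 + v 9) := by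
  calc v ⬝ᵥ (Jmat K *ᵥ ((u'Mat K - 1) *ᵥ v))
      = v 1 * v 2 + v 2 * (v 1 + v 2) + v 4 * v 9 + v 6 * (v 1 + v 2 + v 6 + v 7) +
          v 7 * v 6 + v 8 * (v 2 + v 8 + v 9) + v 9 * (v 2 + v 4 + v 8 + v 9) := by
        simp [u'Mat_sub_one_mulVec, Jmat_mulVec, dotProduct, Fin.sum_univ_succ, add_assoc]
    _ = (v 2 + v 6 + v 8 + v 9) ^ 2 + v 6 * (v 1 + v 2) + v 2 * (v 8 + v 9) := by
        grind

end CoordinateFormulas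

/-- with `X' = u' − I`, for every `v ∈ V` with `X'²v = 0` one has
`β(v, X'v) = 0`. (Hence Hesselink's invariant `χ(2)` of `u'` equals `0`, so `u'` lies in
the symplectic unipotent class labelled `(2₀², 6₃)`.) -/
theorem statement9 (K : Type*) [Field K] [CharP K 2] :
    ∀ v : Fin 10 → K, ((u'Mat K - 1) ^ 2).mulVec v = 0 →
      dotProduct v ((Jmat K).mulVec ((u'Mat K - 1).mulVec v)) = 0 := by
  intro v hv
  obtain ⟨-, h₂, h₆, h₈₉⟩ := (u'Mat_sub_one_sq_mulVec_eq_zero_iff v).mp hv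
  rw [dotProduct_Jmat_mulVec_u'Mat_sub_one_mulVec, h₂, h₆, h₈₉]
  simp [CharTwo.add_self_eq_zero]
end

section
/- Assume additionally that K is algebraically closed. For every natural number n, the K-linear automorphisms of the n-th exterior power ⋀ⁿV induced by u and by u' are conjugate in GL(⋀ⁿV); that is, u and u' act similarly on every exterior power of the natural module V. -/
open Matrix

/-- The endomorphism of the `n`-th exterior power `⋀[K]^n M` induced by an endomorphism `f`
of `M`, obtained by restricting `ExteriorAlgebra.map f` to the submodule `⋀[K]^n M`. -/
def extPowMap (K : Type*) [Field K] {M : Type*} [AddCommGroup M] [Module K M] (n : ℕ)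
    (f : M →ₗ[K] M) : ⋀[K]^n M →ₗ[K] ⋀[K]^n M :=
  (ExteriorAlgebra.map f).toLinearMap.restrict (p := ⋀[K]^n M) (q := ⋀[K]^n M)
    (fun x hx => by
      have h : Submodule.map (ExteriorAlgebra.map f).toLinearMap (⋀[K]^n M) ≤ ⋀[K]^n M := by
        rw [show (⋀[K]^n M : Submodule K (ExteriorAlgebra K M)) =
            LinearMap.range (ExteriorAlgebra.ι K (M := M)) ^ n from rfl,
          Submodule.map_pow, ExteriorAlgebra.ι_range_map_map]
        exact pow_le_pow_left' LinearMap.map_le_range n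
      exact h ⟨x, hx, rfl⟩)

/-!
Both `u` and `u'` are unipotent with Jordan blocks of sizes 6, 2, 2 already over `ZMod 2`, as is
seen from explicit Jordan bases. Hence they are conjugate in `GL₁₀(ZMod 2)`, and functoriality of
scalar extension and of `⋀ⁿ` carries the conjugacy to `⋀ⁿ(K¹⁰)` for every `K` of characteristic 2.
-/

section Conjugacy

theorem isConj_of_mul_eq_one_of_mul_eq_mul {R : Type*} [Monoid R] [IsDedekindFiniteMonoid R]
    {p q a b : R} (hpq : p * q = 1) (h : a * p = p * b) : IsConj b a :=
  ⟨⟨p, q, hpq, mul_eq_one_comm.mp hpq⟩, h.symm⟩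

theorem exists_linearEquiv_of_isConj {R M : Type*} [Semiring R] [AddCommMonoid M] [Module R M]
    {f f' : Module.End R M} (h : IsConj f f') :
    ∃ g : M ≃ₗ[R] M, ∀ x, g (f (g.symm x)) = f' x := by
  obtain ⟨c, hc⟩ := h
  let g := LinearMap.GeneralLinearGroup.generalLinearEquiv R M c
  have g_apply (y : M) : g (f y) = f' (g y) := LinearMap.congr_fun hc y
  exact ⟨g, fun x => by rw [g_apply, g.apply_symm_apply]⟩

end Conjugacy

section ExteriorPower

variable (K : Type*) [Field K] {M : Type*} [AddCommGroup M] [Module K M] (n : ℕ)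

theorem extPowMap_eq_map (f : M →ₗ[K] M) : extPowMap K n f = exteriorPower.map n f := by
  ext m
  simp [extPowMap, ExteriorAlgebra.map_apply_ιMulti, Function.comp_def]

/-- The action `f ↦ ⋀ⁿf` of endomorphisms on the `n`-th exterior power, as a monoid homomorphism;
it transports conjugacy from `M` to `⋀ⁿM`. -/
def extPowMapHom : Module.End K M →* Module.End K (⋀[K]^n M) where
  toFun := extPowMap K n
  map_one' := by rw [extPowMap_eq_map]; exact exteriorPower.map_id
  map_mul' f g := by simp only [extPowMap_eq_map]; exact exteriorPower.map_comp g f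

variable {K}

theorem isConj_extPowMap_mulVecLin {ι : Type*} [Fintype ι] [DecidableEq ι]
    {X Y : Matrix ι ι K} (h : IsConj X Y) :
    IsConj (extPowMap K n X.mulVecLin : Module.End K _) (extPowMap K n Y.mulVecLin) := by
  have hXY : IsConj (toLinAlgEquiv' X) (toLinAlgEquiv' Y) :=
    (toLinAlgEquiv' : Matrix ι ι K ≃ₐ[K] _).toMulEquiv.toMonoidHom.map_isConj h
  exact (extPowMapHom K n).map_isConj hXY

end ExteriorPower

section BaseChange

variable {K L : Type*} [Field K] [Field L] (f : K →+* L)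

theorem mapMatrix_Emat (i j : Fin 10) : f.mapMatrix (Emat K i j) = Emat L i j := by
  simp [Emat, RingHom.mapMatrix_apply, Matrix.map_single]

theorem mapMatrix_Amat : f.mapMatrix (Amat K) = Amat L := by
  simp only [Amat, map_add, map_one, mapMatrix_Emat]

theorem mapMatrix_Bmat : f.mapMatrix (Bmat K) = Bmat L := by
  simp only [Bmat, map_add, mapMatrix_Emat]

theorem mapMatrix_uMat : f.mapMatrix (uMat K) = uMat L := by
  simp only [uMat, map_mul, map_pow, mapMatrix_Amat, mapMatrix_Bmat]

theorem mapMatrix_u'Mat : f.mapMatrix (u'Mat K) = u'Mat L := by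
  simp only [u'Mat, map_mul, map_pow, mapMatrix_Amat, mapMatrix_Bmat]

end BaseChange

section RowOperations

variable {K ι : Type*} [Field K] (X : Matrix (Fin 10) ι K)

theorem Amat_mul :
    Amat K * X = (X.updateRow 0 (X 0 + X 4 + X 9)).updateRow 5 (X 5 + X 9) := by
  ext i j
  fin_cases i <;> simp [Amat, Emat, Matrix.add_mul, Matrix.updateRow_apply]

theorem Bmat_mul : Bmat K * X = X.submatrix ![5, 0, 1, 2, 3, 6, 7, 8, 9, 4] id := by
  ext i j
  fin_cases i <;> simp [Bmat, Emat, Matrix.add_mul]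

end RowOperations

section JordanForm

/-- The unipotent Jordan matrix with blocks of sizes 6, 2, 2, the common Jordan normal form of
`u` and `u'`. -/
def jordanMat (K : Type*) [Field K] : Matrix (Fin 10) (Fin 10) K :=
  1 + Emat K 0 1 + Emat K 1 2 + Emat K 2 3 + Emat K 3 4 + Emat K 4 5 + Emat K 6 7 + Emat K 8 9

/-- A Jordan basis of `u` over `ZMod 2`, as columns: the chains `…, (u - 1)² v, (u - 1) v, v` for
the basis vectors `v = e₁, e₂, e₃` (1-indexed). -/
def uJordanBasis : Matrix (Fin 10) (Fin 10) (ZMod 2) :=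
  !![1, 0, 0, 1, 0, 1, 0, 0, 0, 0;
     0, 0, 0, 0, 0, 0, 1, 1, 0, 0;
     0, 0, 0, 0, 0, 0, 0, 0, 1, 1;
     0, 0, 1, 0, 1, 0, 0, 0, 0, 0;
     1, 1, 0, 1, 1, 0, 0, 0, 0, 0;
     0, 0, 0, 0, 1, 0, 0, 0, 0, 0;
     0, 0, 1, 1, 0, 0, 0, 0, 0, 0;
     0, 0, 0, 0, 0, 0, 0, 0, 1, 0;
     0, 0, 0, 0, 0, 0, 1, 0, 0, 0;
     1, 0, 0, 1, 1, 0, 0, 0, 0, 0]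

/-- The inverse of `uJordanBasis`. -/
def uJordanBasisInv : Matrix (Fin 10) (Fin 10) (ZMod 2) :=
  !![0, 0, 0, 1, 0, 0, 1, 0, 0, 1;
     0, 0, 0, 0, 1, 0, 0, 0, 0, 1;
     0, 0, 0, 1, 0, 1, 0, 0, 0, 0;
     0, 0, 0, 1, 0, 1, 1, 0, 0, 0;
     0, 0, 0, 0, 0, 1, 0, 0, 0, 0;
     1, 0, 0, 0, 0, 1, 0, 0, 0, 1;
     0, 0, 0, 0, 0, 0, 0, 0, 1, 0;
     0, 1, 0, 0, 0, 0, 0, 0, 1, 0;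
     0, 0, 0, 0, 0, 0, 0, 1, 0, 0;
     0, 0, 1, 0, 0, 0, 0, 1, 0, 0]

/-- A Jordan basis of `u'` over `ZMod 2`, as columns: the chains `…, (u' - 1)² v, (u' - 1) v, v`
for `v = e₇, e₅, e₉ + e₁₀` (1-indexed). -/
def u'JordanBasis : Matrix (Fin 10) (Fin 10) (ZMod 2) :=
  !![0, 0, 1, 1, 0, 0, 1, 0, 0, 0;
     0, 0, 1, 1, 0, 0, 0, 0, 0, 0;
     0, 0, 0, 0, 1, 0, 0, 0, 0, 0;
     1, 0, 0, 1, 1, 0, 0, 0, 0, 0;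
     0, 0, 0, 0, 0, 0, 0, 1, 0, 0;
     0, 0, 0, 0, 0, 0, 0, 0, 1, 0;
     0, 0, 0, 0, 0, 1, 0, 0, 0, 0;
     0, 1, 1, 1, 0, 0, 0, 0, 0, 0;
     0, 0, 0, 1, 0, 0, 0, 0, 0, 1;
     0, 0, 0, 0, 0, 0, 0, 0, 0, 1]

/-- The inverse of `u'JordanBasis`. -/
def u'JordanBasisInv : Matrix (Fin 10) (Fin 10) (ZMod 2) :=
  !![0, 0, 1, 1, 0, 0, 0, 0, 1, 1;
     0, 1, 0, 0, 0, 0, 0, 1, 0, 0;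
     0, 1, 0, 0, 0, 0, 0, 0, 1, 1;
     0, 0, 0, 0, 0, 0, 0, 0, 1, 1;
     0, 0, 1, 0, 0, 0, 0, 0, 0, 0;
     0, 0, 0, 0, 0, 0, 1, 0, 0, 0;
     1, 1, 0, 0, 0, 0, 0, 0, 0, 0;
     0, 0, 0, 0, 1, 0, 0, 0, 0, 0;
     0, 0, 0, 0, 0, 1, 0, 0, 0, 0;
     0, 0, 0, 0, 0, 0, 0, 0, 0, 1]

theorem uJordanBasis_mul_uJordanBasisInv : uJordanBasis * uJordanBasisInv = 1 := by
  decide +kernel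

theorem u'JordanBasis_mul_u'JordanBasisInv : u'JordanBasis * u'JordanBasisInv = 1 := by
  decide +kernel

theorem uMat_mul_uJordanBasis :
    uMat (ZMod 2) * uJordanBasis = uJordanBasis * jordanMat (ZMod 2) := by
  -- Entries of the full matrix product cost exponentially many operations in the word length;
  -- as row operations the factors are cheap to evaluate.
  simp only [uMat, pow_succ, pow_zero, one_mul, Matrix.mul_assoc, Amat_mul, Bmat_mul]
  decide +kernel

theorem u'Mat_mul_u'JordanBasis :
    u'Mat (ZMod 2) * u'JordanBasis = u'JordanBasis * jordanMat (ZMod 2) := by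
  simp only [u'Mat, pow_succ, pow_zero, one_mul, Matrix.mul_assoc, Amat_mul, Bmat_mul]
  decide +kernel

theorem isConj_jordanMat_uMat : IsConj (jordanMat (ZMod 2)) (uMat (ZMod 2)) :=
  isConj_of_mul_eq_one_of_mul_eq_mul uJordanBasis_mul_uJordanBasisInv uMat_mul_uJordanBasis

theorem isConj_jordanMat_u'Mat : IsConj (jordanMat (ZMod 2)) (u'Mat (ZMod 2)) :=
  isConj_of_mul_eq_one_of_mul_eq_mul u'JordanBasis_mul_u'JordanBasisInv u'Mat_mul_u'JordanBasis

theorem isConj_uMat_u'Mat (K : Type*) [Field K] [CharP K 2] : IsConj (uMat K) (u'Mat K) := by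
  let f : ZMod 2 →+* K := ZMod.castHom dvd_rfl K
  rw [← mapMatrix_uMat f, ← mapMatrix_u'Mat f]
  exact f.mapMatrix.toMonoidHom.map_isConj <|
    isConj_jordanMat_uMat.symm.trans isConj_jordanMat_u'Mat

end JordanForm

theorem statement13_general (K : Type*) [Field K] [CharP K 2] (n : ℕ) :
    ∃ g : (⋀[K]^n (Fin 10 → K)) ≃ₗ[K] (⋀[K]^n (Fin 10 → K)),
      ∀ x : ⋀[K]^n (Fin 10 → K),
        g (extPowMap K n (Matrix.mulVecLin (uMat K)) (g.symm x)) =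
          extPowMap K n (Matrix.mulVecLin (u'Mat K)) x :=
  exists_linearEquiv_of_isConj (isConj_extPowMap_mulVecLin n (isConj_uMat_u'Mat K))

/-- over an algebraically closed `K` of characteristic `2`, for every `n`
the automorphisms of `⋀ⁿV` induced by `u` and by `u'` are conjugate in `GL(⋀ⁿV)`: there is
a linear automorphism `g` of `⋀[K]^n (Fin 10 → K)` conjugating the map induced by `u` to
the map induced by `u'`. -/
theorem statement13 (K : Type*) [Field K] [CharP K 2] [IsAlgClosed K] (n : ℕ) :
    ∃ g : (⋀[K]^n (Fin 10 → K)) ≃ₗ[K] (⋀[K]^n (Fin 10 → K)),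
      ∀ x : ⋀[K]^n (Fin 10 → K),
        g (extPowMap K n (Matrix.mulVecLin (uMat K)) (g.symm x)) =
          extPowMap K n (Matrix.mulVecLin (u'Mat K)) x :=
  statement13_general K n
end
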